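/- arXiv:1712.02580 — 5 statements merged into one kernel-verified Lean document; each statement's English description precedes it below -/
import Mathlib

section
/- Let T₁ be a bounded linear operator on a complex Banach space X₁ and T₂ a bounded linear operator on a complex Banach space X₂, and let T₁ ⊕ T₂ denote the direct sum operator (x₁, x₂) ↦ (T₁x₁, T₂x₂) on the product Banach space X₁ × X₂. Then S_LY(T₁ ⊕ T₂) = S_LY(T₁) ∪ S_LY(T₂). -/
open Filter

noncomputable section

/-- A bounded linear operator `T` is Li-Yorke chaotic if it admits an uncountable scrambled
set `Γ`: for every pair of distinct points `x, y ∈ Γ`,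
`limsup ‖Tⁿx − Tⁿy‖ > 0` and `liminf ‖Tⁿx − Tⁿy‖ = 0`. -/
def LiYorkeChaotic {X : Type*} [NormedAddCommGroup X] [NormedSpace ℂ X]
    (T : X →L[ℂ] X) : Prop :=
  ∃ Γ : Set X, ¬ Γ.Countable ∧ ∀ x ∈ Γ, ∀ y ∈ Γ, x ≠ y →
    0 < Filter.atTop.limsup (fun n => (‖(T ^ n) x - (T ^ n) y‖₊ : ENNReal)) ∧
    Filter.atTop.liminf (fun n => (‖(T ^ n) x - (T ^ n) y‖₊ : ENNReal)) = 0

/-- The Li-Yorke chaos translation set of `T`: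
`S_LY(T) = {λ ∈ ℂ : λ·I + T is Li-Yorke chaotic}`. -/
def SLY {X : Type*} [NormedAddCommGroup X] [NormedSpace ℂ X]
    (T : X →L[ℂ] X) : Set ℂ :=
  {z : ℂ | LiYorkeChaotic (z • (1 : X →L[ℂ] X) + T)}

theorem LiYorkeChaotic_iff_exists {X : Type*} [NormedAddCommGroup X] [NormedSpace ℂ X]
    (T : X →L[ℂ] X) : LiYorkeChaotic T ↔ ∃ u : X,
      0 < Filter.atTop.limsup (fun n => (‖(T ^ n) u‖₊ : ENNReal)) ∧
      Filter.atTop.liminf (fun n => (‖(T ^ n) u‖₊ : ENNReal)) = 0 := by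
  constructor
  · rintro ⟨Γ, hc, h⟩
    have hn : ¬ Γ.Subsingleton := fun hs => hc hs.countable
    rw [Set.not_subsingleton_iff] at hn
    obtain ⟨x, hx, y, hy, hxy⟩ := hn
    exact ⟨x - y, by simpa only [map_sub] using h x hx y hy hxy⟩
  · rintro ⟨u, h1, h2⟩
    have hu : u ≠ 0 := by
      rintro rfl
      simp at h1
    refine ⟨Set.range (fun t : ℝ => (t : ℂ) • u), ?_, ?_⟩
    · intro hc
      have hinj : Function.Injective (fun t : ℝ => (t : ℂ) • u) := by
        intro s t hst
        exact Complex.ofReal_injective (smul_left_injective ℂ hu hst)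
      rw [← Set.image_univ] at hc
      exact Cardinal.not_countable_real (Set.countable_of_injective_of_countable_image hinj.injOn hc)
    · rintro _ ⟨s, rfl⟩ _ ⟨t, rfl⟩ hst
      have hne : (s : ℂ) - t ≠ 0 := by
        intro h
        apply hst
        simp only [sub_eq_zero.mp h]
      have heq : (fun n : ℕ => (‖(T ^ n) ((s : ℂ) • u) - (T ^ n) ((t : ℂ) • u)‖₊ : ENNReal))
          = fun n => (‖(s : ℂ) - t‖₊ : ENNReal) * (‖(T ^ n) u‖₊ : ENNReal) := by
        funext n
        rw [map_smul, map_smul, ← sub_smul, nnnorm_smul, ENNReal.coe_mul]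
      have hpos : (‖(s : ℂ) - t‖₊ : ENNReal) ≠ 0 := by simpa using hne
      simp only [heq]
      rw [ENNReal.limsup_const_mul_of_ne_top ENNReal.coe_ne_top,
        ENNReal.liminf_const_mul_of_ne_top ENNReal.coe_ne_top, h2, mul_zero]
      exact ⟨ENNReal.mul_pos hpos h1.ne', rfl⟩

theorem prodMap_translate_pow {X₁ X₂ : Type*} [NormedAddCommGroup X₁] [NormedSpace ℂ X₁]
    [NormedAddCommGroup X₂] [NormedSpace ℂ X₂]
    (T₁ : X₁ →L[ℂ] X₁) (T₂ : X₂ →L[ℂ] X₂) (z : ℂ) (n : ℕ) (u : X₁ × X₂) :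
    ((z • (1 : X₁ × X₂ →L[ℂ] X₁ × X₂) + T₁.prodMap T₂) ^ n) u =
      (((z • (1 : X₁ →L[ℂ] X₁) + T₁) ^ n) u.1, ((z • (1 : X₂ →L[ℂ] X₂) + T₂) ^ n) u.2) := by
  induction n with
  | zero => simp
  | succ n ih =>
    rw [pow_succ', pow_succ', pow_succ', mul_apply_eq_comp,
      mul_apply_eq_comp, mul_apply_eq_comp, ih]
    ext <;> simp

theorem SLY_prodMap {X₁ X₂ : Type*} [NormedAddCommGroup X₁] [NormedSpace ℂ X₁]
    [CompleteSpace X₁] [NormedAddCommGroup X₂] [NormedSpace ℂ X₂] [CompleteSpace X₂]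
    (T₁ : X₁ →L[ℂ] X₁) (T₂ : X₂ →L[ℂ] X₂) :
    SLY (T₁.prodMap T₂) = SLY T₁ ∪ SLY T₂ := by
  ext z
  simp only [SLY, Set.mem_union, Set.mem_ofPred_eq, LiYorkeChaotic_iff_exists,
    prodMap_translate_pow, Prod.nnnorm_mk]
  constructor
  · rintro ⟨⟨u, v⟩, h1, h2⟩
    by_contra! hcon
    obtain ⟨ha, hb⟩ := hcon
    have hu := le_antisymm (le_trans (liminf_le_liminf (Eventually.of_forall fun n =>
      ENNReal.coe_le_coe.2 (le_max_left _ _))) h2.le) (zero_le : (0 : ENNReal) ≤ _)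
    have hv := le_antisymm (le_trans (liminf_le_liminf (Eventually.of_forall fun n =>
      ENNReal.coe_le_coe.2 (le_max_right _ _))) h2.le) (zero_le : (0 : ENNReal) ≤ _)
    have ha' := not_lt.1 (fun h => ha u h hu)
    have hb' := not_lt.1 (fun h => hb v h hv)
    refine absurd h1 (not_lt.2 ?_)
    simp only [ENNReal.coe_max]
    rw [limsup_max]
    exact max_le ha' hb'
  · rintro (⟨u, h⟩ | ⟨u, h⟩)
    · exact ⟨(u, 0), by simpa only [map_zero, nnnorm_zero, zero_le, max_eq_left, max_eq_right] using h⟩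
    · exact ⟨(0, u), by simpa only [map_zero, nnnorm_zero, zero_le, max_eq_left, max_eq_right] using h⟩
end
end

section
/- If T is a normal bounded linear operator (i.e. T*T = TT*) on a separable complex Hilbert space H, then S_LY(T) = ∅; that is, λ·I + T is not Li-Yorke chaotic for any λ ∈ ℂ. -/
open Filter

noncomputable section

theorem normal_log_convex {H : Type*} [NormedAddCommGroup H] [InnerProductSpace ℂ H]
    [CompleteSpace H] (N : H →L[ℂ] H) (hN : IsStarNormal N) (y : H) :
    ‖N y‖ ^ 2 ≤ ‖N (N y)‖ * ‖y‖ := by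
  have h1 := ContinuousLinearMap.isStarNormal_iff_norm_eq_adjoint.mp hN (N y)
  rw [h1, ContinuousLinearMap.apply_norm_sq_eq_inner_adjoint_left]
  refine (RCLike.re_le_norm _).trans ?_
  exact norm_inner_le_norm _ _

theorem seq_dichotomy (a : ℕ → NNReal) (h : ∀ n, a (n + 1) ^ 2 ≤ a (n + 2) * a n)
    (hl : Filter.atTop.liminf (fun n => (a n : ENNReal)) = 0) :
    Filter.atTop.limsup (fun n => (a n : ENNReal)) = 0 := by
  have hanti : Antitone a := by
    apply antitone_nat_of_succ_le
    intro n
    by_contra hlt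
    push Not at hlt
    have key : ∀ m, a (n + m) < a (n + m + 1) := by
      intro m
      induction m with
      | zero => simpa using hlt
      | succ m ih =>
        have h2 := h (n + m)
        by_contra hc
        push Not at hc
        have hc' : a (n + m + 2) ≤ a (n + m + 1) := hc
        have hpos : 0 < a (n + m + 1) := lt_of_le_of_lt zero_le ih
        have h3 : a (n + m + 2) * a (n + m) ≤ a (n + m + 1) * a (n + m) := by gcongr
        have h4 : a (n + m + 1) * a (n + m) < a (n + m + 1) * a (n + m + 1) := by gcongr
        rw [sq] at h2
        exact absurd (h2.trans h3) (not_le.mpr h4)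
    have hmono : Monotone (fun m => a (n + m)) := monotone_nat_of_le_succ fun m => (key m).le
    have hle : (a (n + 1) : ENNReal) ≤ Filter.atTop.liminf (fun n => (a n : ENNReal)) := by
      apply Filter.le_liminf_of_le
      · isBoundedDefault
      filter_upwards [Filter.eventually_ge_atTop (n + 1)] with k hk
      obtain ⟨j, rfl⟩ := Nat.exists_eq_add_of_le (show n ≤ k by omega)
      exact_mod_cast hmono (show 1 ≤ j by omega)
    rw [hl] at hle
    have h0 : a (n + 1) = 0 := by simpa using hle
    rw [h0] at hlt
    exact absurd hlt (not_lt.mpr zero_le)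
  have hanti' : Antitone (fun n => (a n : ENNReal)) := fun i j hij => by
    exact ENNReal.coe_le_coe.mpr (hanti hij)
  have ht := tendsto_atTop_iInf hanti'
  rw [ht.limsup_eq, ← ht.liminf_eq, hl]

theorem SLY_normal_eq_empty {H : Type*} [NormedAddCommGroup H] [InnerProductSpace ℂ H]
    [CompleteSpace H] [TopologicalSpace.SeparableSpace H] (T : H →L[ℂ] H)
    (hnormal : (ContinuousLinearMap.adjoint T) ∘L T = T ∘L (ContinuousLinearMap.adjoint T)) :
    SLY T = ∅ := by
  rw [Set.eq_empty_iff_forall_notMem]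
  rintro z ⟨Γ, hΓ, hch⟩
  set N : H →L[ℂ] H := z • (1 : H →L[ℂ] H) + T with hNdef
  have hT : star T * T = T * star T := hnormal
  have hN : IsStarNormal N := by
    refine ⟨?_⟩
    show star N * N = N * star N
    simp only [hNdef, star_add, star_smul, star_one, add_mul, mul_add, smul_add, hT, smul_mul_assoc,
      mul_smul_comm, one_mul, mul_one, smul_comm z (star z)]
    abel
  have hnt : Γ.Nontrivial := by
    by_contra hc
    exact hΓ (Set.not_nontrivial_iff.mp hc).finite.countable
  obtain ⟨x, hx, y, hy, hxy⟩ := hnt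
  obtain ⟨h1, h2⟩ := hch x hx y hy hxy
  refine h1.ne' (seq_dichotomy _ (fun n => ?_) h2)
  have := normal_log_convex N hN ((N ^ n) (x - y))
  rw [← NNReal.coe_le_coe]
  simp only [NNReal.coe_pow, NNReal.coe_mul, coe_nnnorm]
  rw [← map_sub, ← map_sub, ← map_sub]
  rw [show n + 2 = (n + 1) + 1 from rfl, pow_succ' N (n + 1), pow_succ' N n]
  exact this
end
end

section
/- Let T be the unilateral forward shift on the complex Hilbert space ℓ²(ℕ), i.e. the bounded linear operator with T(x₁, x₂, x₃, …) = (0, x₁, x₂, …). Then S_LY(2T) = ∅; that is, λ·I + 2T is not Li-Yorke chaotic for any λ ∈ ℂ. -/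
open Filter

noncomputable section

theorem shift_norm_aux
    (T : lp (fun _ : ℕ => ℂ) 2 →L[ℂ] lp (fun _ : ℕ => ℂ) 2)
    (hT : ∀ x : lp (fun _ : ℕ => ℂ) 2,
      (T x : ℕ → ℂ) 0 = 0 ∧ ∀ n : ℕ, (T x : ℕ → ℂ) (n + 1) = (x : ℕ → ℂ) n)
    (x : lp (fun _ : ℕ => ℂ) 2) : ‖T x‖ = ‖x‖ := by
  have hp : 0 < (2 : ENNReal).toReal := by norm_num
  have h1 := lp.hasSum_norm hp x
  have h2 := lp.hasSum_norm hp (T x)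
  have h3 := (hasSum_nat_add_iff' 1).mpr h2
  simp only [(hT x).2, Finset.range_one, Finset.sum_singleton, (hT x).1] at h3
  have h4 := h1.unique h3
  have h5 : ‖x‖ ^ 2 = ‖T x‖ ^ 2 := by simpa using h4
  exact ((sq_eq_sq₀ (norm_nonneg _) (norm_nonneg _)).mp h5).symm

theorem lower_bound_aux
    (T : lp (fun _ : ℕ => ℂ) 2 →L[ℂ] lp (fun _ : ℕ => ℂ) 2)
    (hT : ∀ x : lp (fun _ : ℕ => ℂ) 2,
      (T x : ℕ → ℂ) 0 = 0 ∧ ∀ n : ℕ, (T x : ℕ → ℂ) (n + 1) = (x : ℕ → ℂ) n)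
    (z : ℂ) (w : lp (fun _ : ℕ => ℂ) 2) (hw : w ≠ 0) :
    ∃ c : ℝ, 0 < c ∧ ∀ n : ℕ,
      c ≤ ‖((z • (1 : lp (fun _ : ℕ => ℂ) 2 →L[ℂ] lp (fun _ : ℕ => ℂ) 2)
        + (2 : ℂ) • T) ^ n) w‖ := by
  set A := z • (1 : lp (fun _ : ℕ => ℂ) 2 →L[ℂ] lp (fun _ : ℕ => ℂ) 2) + (2 : ℂ) • T with hA
  have hAx : ∀ x, A x = z • x + (2 : ℂ) • T x := fun x => by simp [hA]
  have hsucc : ∀ n, (A ^ (n + 1)) w = A ((A ^ n) w) := fun n => by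
    rw [pow_succ']; rfl
  rcases le_or_gt 1 ‖z‖ with hz | hz
  · -- the first nonzero coefficient is multiplied by `z` at each step
    have hex : ∃ k, (w : ℕ → ℂ) k ≠ 0 := by
      by_contra! h
      exact hw (lp.ext (funext h))
    classical
    set k := Nat.find hex with hk
    have hk0 : (w : ℕ → ℂ) k ≠ 0 := Nat.find_spec hex
    have hlt : ∀ j < k, (w : ℕ → ℂ) j = 0 := fun j hj => by
      simpa using Nat.find_min hex hj
    have key : ∀ n, (∀ j < k, ((A ^ n) w : ℕ → ℂ) j = 0) ∧
        ((A ^ n) w : ℕ → ℂ) k = z ^ n * (w : ℕ → ℂ) k := by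
      intro n
      induction n with
      | zero => exact ⟨by simpa using hlt, by simp⟩
      | succ n ih =>
        have hco : ∀ j, ((A ^ (n + 1)) w : ℕ → ℂ) j
            = z * ((A ^ n) w : ℕ → ℂ) j + 2 * (T ((A ^ n) w) : ℕ → ℂ) j := fun j => by
          rw [hsucc, hAx]; rfl
        have hT0 : ∀ j ≤ k, (T ((A ^ n) w) : ℕ → ℂ) j = 0 := by
          intro j hj
          cases j with
          | zero => exact (hT _).1
          | succ j => rw [(hT _).2]; exact ih.1 j (by omega)
        refine ⟨fun j hj => ?_, ?_⟩
        · rw [hco, ih.1 j hj, hT0 j hj.le]; simp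
        · rw [hco, ih.2, hT0 k le_rfl]; ring
    refine ⟨‖(w : ℕ → ℂ) k‖, norm_pos_iff.mpr hk0, fun n => ?_⟩
    refine le_trans ?_ (lp.norm_apply_le_norm (by norm_num) ((A ^ n) w) k)
    rw [(key n).2, norm_mul, norm_pow]
    exact le_mul_of_one_le_left (norm_nonneg _) (one_le_pow₀ hz)
  · -- `A` is expanding
    refine ⟨‖w‖, norm_pos_iff.mpr hw, fun n => ?_⟩
    induction n with
    | zero => simp
    | succ n ih =>
      refine ih.trans ?_
      rw [hsucc, hAx]
      set x := (A ^ n) w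
      have h1 : ‖(2 : ℂ) • T x‖ = 2 * ‖x‖ := by
        rw [norm_smul, shift_norm_aux T hT]; simp
      have h2 : ‖z • x‖ = ‖z‖ * ‖x‖ := norm_smul _ _
      have h3 : ‖(2 : ℂ) • T x‖ ≤ ‖z • x + (2 : ℂ) • T x‖ + ‖z • x‖ := by
        simpa using norm_sub_le (z • x + (2 : ℂ) • T x) (z • x)
      nlinarith [norm_nonneg x]

theorem SLY_two_smul_shift_eq_empty
    (T : lp (fun _ : ℕ => ℂ) 2 →L[ℂ] lp (fun _ : ℕ => ℂ) 2)
    (hT : ∀ x : lp (fun _ : ℕ => ℂ) 2,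
      (T x : ℕ → ℂ) 0 = 0 ∧ ∀ n : ℕ, (T x : ℕ → ℂ) (n + 1) = (x : ℕ → ℂ) n) :
    SLY ((2 : ℂ) • T) = ∅ := by
  refine Set.eq_empty_iff_forall_notMem.mpr ?_
  rintro z ⟨Γ, hΓ, h⟩
  have hnt : ¬ Γ.Subsingleton := fun hs => hΓ hs.countable
  rw [Set.not_subsingleton_iff] at hnt
  obtain ⟨x, hx, y, hy, hxy⟩ := hnt
  obtain ⟨c, hc, hb⟩ := lower_bound_aux T hT z (x - y) (sub_ne_zero.mpr hxy)
  have h0 := (h x hx y hy hxy).2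
  have hle : ENNReal.ofReal c ≤ 0 := by
    rw [← h0]
    refine le_liminf_of_le (by isBoundedDefault) (Eventually.of_forall fun n => ?_)
    have := hb n
    rw [map_sub] at this
    refine (ENNReal.ofReal_le_ofReal this).trans (le_of_eq ?_)
    exact ofReal_norm _
  exact absurd hle (not_le.mpr (ENNReal.ofReal_pos.mpr hc))
end
end

section
/- Let T be the unilateral forward weighted shift on ℓ²(ℕ) with weight sequence (ωₙ)_{n≥1}, i.e. T(x₁, x₂, x₃, …) = (0, ω₁x₁, ω₂x₂, …), where ωₙ ≠ 0 for all n and ωₙ → 0 as n → ∞, and assume T is compact and quasinilpotent (its spectral radius is 0). Then S_LY(T) = ∅; that is, λ·I + T is not Li-Yorke chaotic for any λ ∈ ℂ. -/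
open Filter

noncomputable section

lemma aux_pow_tendsto {A : Type*} [NormedRing A] [NormedAlgebra ℂ A] [CompleteSpace A] (a : A)
    (h : spectralRadius ℂ a < 1) : Tendsto (fun n => a ^ n) atTop (nhds 0) := by
  obtain ⟨r, hr1, hr2⟩ := exists_between h
  have h1 := spectrum.pow_nnnorm_pow_one_div_tendsto_nhds_spectralRadius a
  have h2 : Tendsto (fun n : ℕ => r ^ n) atTop (nhds 0) :=
    ENNReal.tendsto_pow_atTop_nhds_zero_of_lt_one hr2
  rw [tendsto_zero_iff_norm_tendsto_zero]
  have h3 : Tendsto (fun n => (‖a ^ n‖₊ : ENNReal)) atTop (nhds 0) := by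
    refine tendsto_of_tendsto_of_tendsto_of_le_of_le' tendsto_const_nhds h2
      (Eventually.of_forall fun _ => zero_le) ?_
    filter_upwards [h1.eventually (gt_mem_nhds hr1), eventually_gt_atTop 0] with n hn hn0
    have hn0' : (0 : ℝ) < n := by exact_mod_cast hn0
    have := ENNReal.rpow_le_rpow hn.le hn0'.le
    rwa [← ENNReal.rpow_mul, one_div_mul_cancel hn0'.ne', ENNReal.rpow_one,
      ENNReal.rpow_natCast] at this
  have h4 := (ENNReal.tendsto_toReal (by simp : (0 : ENNReal) ≠ ⊤)).comp h3
  simpa [Function.comp_def] using h4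

lemma aux_radius {A : Type*} [NormedRing A] [NormedAlgebra ℂ A] (a : A)
    (h : spectralRadius ℂ a = 0) (z : ℂ) :
    spectralRadius ℂ (z • (1 : A) + a) ≤ ‖z‖₊ := by
  unfold spectralRadius at h ⊢
  refine iSup₂_le fun k hk => ?_
  have hk' : k - z ∈ spectrum ℂ a := by
    rw [← Algebra.algebraMap_eq_smul_one] at hk
    have := (spectrum.add_mem_add_iff (R := ℂ) (a := a) (r := k - z) (s := z)).1
    apply this
    simpa [add_comm] using hk
  have h0 : (‖k - z‖₊ : ENNReal) ≤ 0 := by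
    rw [← h]
    exact le_iSup₂ (f := fun (k : ℂ) (_ : k ∈ spectrum ℂ a) => (‖k‖₊ : ENNReal)) (k - z) hk'
  have : k - z = 0 := by simpa using h0
  rw [sub_eq_zero.1 this]

lemma aux_coord (ω : ℕ → ℂ)
    (T : lp (fun _ : ℕ => ℂ) 2 →L[ℂ] lp (fun _ : ℕ => ℂ) 2)
    (hT : ∀ x : lp (fun _ : ℕ => ℂ) 2,
      (T x : ℕ → ℂ) 0 = 0 ∧ ∀ n : ℕ, (T x : ℕ → ℂ) (n + 1) = ω n * (x : ℕ → ℂ) n)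
    (z : ℂ) (v : lp (fun _ : ℕ => ℂ) 2) (m : ℕ) (hm : ∀ j < m, (v : ℕ → ℂ) j = 0) (n : ℕ) :
    (∀ j < m, (((z • (1 : lp (fun _ : ℕ => ℂ) 2 →L[ℂ] lp (fun _ : ℕ => ℂ) 2) + T) ^ n) v :
      ℕ → ℂ) j = 0) ∧
    (((z • (1 : lp (fun _ : ℕ => ℂ) 2 →L[ℂ] lp (fun _ : ℕ => ℂ) 2) + T) ^ n) v :
      ℕ → ℂ) m = z ^ n * (v : ℕ → ℂ) m := by
  induction n with
  | zero => simpa using hm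
  | succ n ih =>
    rw [pow_succ']
    generalize ((z • (1 : lp (fun _ : ℕ => ℂ) 2 →L[ℂ] lp (fun _ : ℕ => ℂ) 2) + T) ^ n) = B at *
    have key : ∀ j ≤ m, (((z • (1 : lp (fun _ : ℕ => ℂ) 2 →L[ℂ] lp (fun _ : ℕ => ℂ) 2) + T) * B) v
        : ℕ → ℂ) j = z * (B v : ℕ → ℂ) j := by
      intro j hj
      have h0 : (T (B v) : ℕ → ℂ) j = 0 := by
        cases j with
        | zero => exact (hT _).1
        | succ j => rw [(hT _).2, ih.1 j (by omega), mul_zero]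
      change z * (B v : ℕ → ℂ) j + (T (B v) : ℕ → ℂ) j = _
      rw [h0, add_zero]
    refine ⟨fun j hj => by rw [key j hj.le, ih.1 j hj, mul_zero], ?_⟩
    rw [key m le_rfl, ih.2, pow_succ']; ring

theorem SLY_weighted_shift_eq_empty
    (ω : ℕ → ℂ) (hω : ∀ n, ω n ≠ 0) (hω0 : Filter.Tendsto ω Filter.atTop (nhds 0))
    (T : lp (fun _ : ℕ => ℂ) 2 →L[ℂ] lp (fun _ : ℕ => ℂ) 2)
    (hT : ∀ x : lp (fun _ : ℕ => ℂ) 2,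
      (T x : ℕ → ℂ) 0 = 0 ∧ ∀ n : ℕ, (T x : ℕ → ℂ) (n + 1) = ω n * (x : ℕ → ℂ) n)
    (hcompact : IsCompactOperator T)
    (hquasi : spectralRadius ℂ T = 0) :
    SLY T = ∅ := by
  rw [Set.eq_empty_iff_forall_notMem]
  rintro z ⟨Γ, hΓ, h⟩
  have hns : ¬ Γ.Subsingleton := fun hs => hΓ hs.countable
  rw [Set.not_subsingleton_iff] at hns
  obtain ⟨x, hx, y, hy, hxy⟩ := hns
  obtain ⟨h1, h2⟩ := h x hx y hy hxy
  simp only [← map_sub] at h1 h2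
  have hv : x - y ≠ 0 := sub_ne_zero.2 hxy
  generalize x - y = v at h1 h2 hv
  rcases lt_or_ge ‖z‖ 1 with hz | hz
  · have ht := aux_pow_tendsto (z • (1 : lp (fun _ : ℕ => ℂ) 2 →L[ℂ] lp (fun _ : ℕ => ℂ) 2) + T)
      ((aux_radius T hquasi z).trans_lt (by exact_mod_cast hz))
    have ht2 : Tendsto (fun n => (((z • (1 : lp (fun _ : ℕ => ℂ) 2 →L[ℂ]
        lp (fun _ : ℕ => ℂ) 2) + T) ^ n) v)) atTop (nhds 0) := by
      have := ((ContinuousLinearMap.apply ℂ (lp (fun _ : ℕ => ℂ) 2) v).continuous.tendsto 0).comp ht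
      simpa [Function.comp_def] using this
    have ht3 := (ENNReal.continuous_coe.tendsto _).comp ht2.nnnorm
    have := ht3.limsup_eq
    simp only [Function.comp_def, nnnorm_zero, ENNReal.coe_zero] at this
    rw [this] at h1
    exact lt_irrefl _ h1
  · have hex : ∃ m, (v : ℕ → ℂ) m ≠ 0 := by
      by_contra! hc
      exact hv (lp.ext (funext hc))
    classical
    have hm := Nat.find_spec hex
    have hlt : ∀ j < Nat.find hex, (v : ℕ → ℂ) j = 0 := fun j hj => by
      simpa using Nat.find_min hex hj
    generalize Nat.find hex = m at hm hlt
    have hle : (‖(v : ℕ → ℂ) m‖₊ : ENNReal) ≤ 0 := by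
      rw [← h2]
      refine le_liminf_of_le (by isBoundedDefault) (Eventually.of_forall fun n => ?_)
      have hc := (aux_coord ω T hT z v m hlt n).2
      have hn := lp.norm_apply_le_norm (p := 2) (by simp) (((z • (1 : lp (fun _ : ℕ => ℂ) 2 →L[ℂ]
        lp (fun _ : ℕ => ℂ) 2) + T) ^ n) v) m
      rw [hc, norm_mul, norm_pow] at hn
      have h1n : 1 ≤ ‖z‖ ^ n := one_le_pow₀ hz
      rw [ENNReal.coe_le_coe, ← NNReal.coe_le_coe, coe_nnnorm, coe_nnnorm]
      exact (le_mul_of_one_le_left (norm_nonneg _) h1n).trans hn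
    apply hm
    simpa using hle
end
end

section
/- Let S be the Kalisch operator on L²[0,2π]. For every w ∈ ℂ, every positive integer n, and every f ∈ L²[0,2π], one has, for almost every θ ∈ [0,2π]: ((w·I + S)ⁿ f)(θ) = (w + e^{iθ})ⁿ f(θ) − n ∫₀^θ i e^{it} (w + e^{it})^{n−1} f(t) dt. -/
open Filter

noncomputable section

open MeasureTheory Real in
/-- Lebesgue measure restricted to `[0, 2π]`. -/
def muK : Measure ℝ := volume.restrict (Set.Icc 0 (2 * π))

open MeasureTheory Real in
/-- Integration by parts against an integrable function, via Fubini. -/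
theorem parts_aux (u u' h : ℝ → ℂ) (θ : ℝ) (hθ : 0 ≤ θ)
    (hu : ∀ x, HasDerivAt u (u' x) x) (hu' : Continuous u')
    (hh : IntegrableOn h (Set.Ioc 0 θ)) :
    ∫ s in (0 : ℝ)..θ, u' s * ∫ t in (0 : ℝ)..s, h t =
      u θ * (∫ t in (0 : ℝ)..θ, h t) - ∫ t in (0 : ℝ)..θ, u t * h t := by
  have hcu : Continuous u := continuous_iff_continuousAt.2 fun x => (hu x).continuousAt
  have hu'i : IntegrableOn u' (Set.Ioc 0 θ) :=
    (hu'.integrableOn_Icc (a := 0) (b := θ)).mono_set Set.Ioc_subset_Icc_self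
  let D : Set (ℝ × ℝ) := {p | p.2 ≤ p.1}
  have hD : MeasurableSet D := measurableSet_le measurable_snd measurable_fst
  have hint : Integrable (Function.uncurry fun s t => D.indicator (fun p => u' p.1 * h p.2) (s, t))
      ((volume.restrict (Set.Ioc 0 θ)).prod (volume.restrict (Set.Ioc 0 θ))) :=
    (Integrable.mul_prod hu'i hh).indicator hD
  have key := integral_integral_swap hint
  have e1 : ∫ s in (0 : ℝ)..θ, u' s * ∫ t in (0 : ℝ)..s, h t =
      ∫ s in Set.Ioc 0 θ, ∫ t in Set.Ioc 0 θ, D.indicator (fun p => u' p.1 * h p.2) (s, t) := by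
    rw [intervalIntegral.integral_of_le hθ]
    refine setIntegral_congr_fun measurableSet_Ioc fun s hs => ?_
    have : ∀ t, D.indicator (fun p => u' p.1 * h p.2) (s, t)
        = (Set.Iic s).indicator (fun t => u' s * h t) t := by
      intro t; simp [D, Set.indicator_apply]
    simp only [this]
    rw [setIntegral_indicator measurableSet_Iic, Set.Ioc_inter_Iic, min_eq_right hs.2,
      integral_const_mul, intervalIntegral.integral_of_le hs.1.le]
  have e2 : ∫ t in Set.Ioc 0 θ, ∫ s in Set.Ioc 0 θ, D.indicator (fun p => u' p.1 * h p.2) (s, t)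
      = ∫ t in Set.Ioc 0 θ, (u θ * h t - u t * h t) := by
    refine setIntegral_congr_fun measurableSet_Ioc fun t ht => ?_
    have : ∀ s, D.indicator (fun p => u' p.1 * h p.2) (s, t)
        = (Set.Ici t).indicator (fun s => u' s * h t) s := by
      intro s; simp [D, Set.indicator_apply]
    simp only [this]
    have hs : Set.Ioc 0 θ ∩ Set.Ici t = Set.Icc t θ := by
      ext x; simp only [Set.mem_inter_iff, Set.mem_Ioc, Set.mem_Ici, Set.mem_Icc]
      exact ⟨fun h => ⟨h.2, h.1.2⟩, fun h => ⟨⟨lt_of_lt_of_le ht.1 h.1, h.2⟩, h.1⟩⟩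
    rw [setIntegral_indicator measurableSet_Ici, hs, integral_Icc_eq_integral_Ioc,
      integral_mul_const, ← intervalIntegral.integral_of_le ht.2,
      intervalIntegral.integral_eq_sub_of_hasDerivAt (fun x _ => hu x)
        (hu'.intervalIntegrable _ _), sub_mul]
  have hi2 : IntegrableOn (fun t => u t * h t) (Set.Ioc 0 θ) := by
    have := (((intervalIntegrable_iff_integrableOn_Ioc_of_le hθ).2 hh).continuousOn_mul
      (hcu.continuousOn))
    exact (intervalIntegrable_iff_integrableOn_Ioc_of_le hθ).1 this
  rw [e1, key, e2, integral_sub (hh.const_mul _) hi2, integral_const_mul,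
    intervalIntegral.integral_of_le hθ, intervalIntegral.integral_of_le hθ]

open MeasureTheory Real in
theorem muK_integral (h : ℝ → ℂ) (θ : ℝ) (hθ : θ ∈ Set.Icc 0 (2 * π)) :
    ∫ t in (0 : ℝ)..θ, h t ∂muK = ∫ t in (0 : ℝ)..θ, h t := by
  rw [intervalIntegral.integral_of_le hθ.1, intervalIntegral.integral_of_le hθ.1, muK,
    Measure.restrict_restrict measurableSet_Ioc, Set.inter_eq_left.2]
  exact fun x hx => ⟨hx.1.le, hx.2.trans hθ.2⟩

open MeasureTheory Real in
theorem muK_congr (g h : ℝ → ℂ) (θ : ℝ) (hgh : ∀ᵐ t ∂muK, g t = h t) :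
    ∫ t in (0 : ℝ)..θ, g t ∂muK = ∫ t in (0 : ℝ)..θ, h t ∂muK :=
  intervalIntegral.integral_congr_ae (hgh.mono fun _ h _ => h)

open MeasureTheory Real in
theorem kalisch_aux
    (S : Lp ℂ 2 muK →L[ℂ] Lp ℂ 2 muK)
    (hS : ∀ f : Lp ℂ 2 muK, ∀ᵐ θ ∂muK,
      (S f : ℝ → ℂ) θ = Complex.exp (Complex.I * θ) * (f : ℝ → ℂ) θ -
        ∫ t in (0 : ℝ)..θ, Complex.I * Complex.exp (Complex.I * t) * (f : ℝ → ℂ) t ∂muK)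
    (w : ℂ) (n : ℕ) (f : Lp ℂ 2 muK) :
    ∀ᵐ θ ∂muK,
      (((w • (1 : Lp ℂ 2 muK →L[ℂ] Lp ℂ 2 muK) + S) ^ n) f : ℝ → ℂ) θ =
        (w + Complex.exp (Complex.I * θ)) ^ n * (f : ℝ → ℂ) θ -
          (n : ℂ) * ∫ t in (0 : ℝ)..θ, Complex.I * Complex.exp (Complex.I * t) *
            (w + Complex.exp (Complex.I * t)) ^ (n - 1) * (f : ℝ → ℂ) t ∂muK := by
  induction n with
  | zero => simp
  | succ n ih =>
    set T := w • (1 : Lp ℂ 2 muK →L[ℂ] Lp ℂ 2 muK) + S with hT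
    set g := (T ^ n) f with hg
    have hTg : (T ^ (n + 1)) f = w • g + S g := by
      rw [pow_succ', mul_apply_eq_comp, ← hg, hT]
      simp
    rw [hTg]
    have : IsFiniteMeasure muK := by unfold muK; infer_instance
    have hf1 : Integrable (f : ℝ → ℂ) muK := (Lp.memLp f).integrable (by norm_num)
    have hmem : ∀ᵐ θ ∂muK, θ ∈ Set.Icc 0 (2 * π) := ae_restrict_mem measurableSet_Icc
    have hu : ∀ x : ℝ, HasDerivAt (fun t : ℝ => w + Complex.exp (Complex.I * t))
        (Complex.I * Complex.exp (Complex.I * x)) x := by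
      intro x
      have h1 : HasDerivAt (fun t : ℝ => Complex.I * (t : ℂ)) (Complex.I * 1) x :=
        (Complex.ofRealCLM.hasDerivAt (x := x)).const_mul Complex.I
      have := h1.cexp.const_add w
      rw [mul_one, mul_comm] at this
      exact this
    have hu' : Continuous fun x : ℝ => Complex.I * Complex.exp (Complex.I * x) := by fun_prop
    have hfi : ∀ (c : ℝ → ℂ), Continuous c → ∀ θ ∈ Set.Icc 0 (2 * π),
        IntegrableOn (fun t => c t * (f : ℝ → ℂ) t) (Set.Ioc 0 θ) := by
      intro c hc θ hθ
      have h1 : IntegrableOn (f : ℝ → ℂ) (Set.Ioc 0 θ) :=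
        IntegrableOn.mono_set (t := Set.Icc 0 (2 * π)) hf1
          fun x hx => ⟨hx.1.le, hx.2.trans hθ.2⟩
      exact (intervalIntegrable_iff_integrableOn_Ioc_of_le hθ.1).1
        (((intervalIntegrable_iff_integrableOn_Ioc_of_le hθ.1).2 h1).continuousOn_mul
          hc.continuousOn)
    filter_upwards [ih, hS g, hmem, Lp.coeFn_add (w • g) (S g), Lp.coeFn_smul w g]
      with θ h1 h2 h3 h4 h5
    rw [h4, Pi.add_apply, h5, Pi.smul_apply, h2, h1, smul_eq_mul]
    rw [muK_congr (fun t => Complex.I * Complex.exp (Complex.I * t) * (g : ℝ → ℂ) t) _ θ (ih.mono fun t ht => congrArg _ ht)]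
    simp only [muK_integral _ θ h3, Nat.add_sub_cancel]
    set F : ℝ → ℂ := fun s => ∫ t in (0 : ℝ)..s, Complex.I * Complex.exp (Complex.I * t) *
            (w + Complex.exp (Complex.I * t)) ^ (n - 1) * (f : ℝ → ℂ) t with hF
    have hP := parts_aux _ _ (fun t : ℝ => Complex.I * Complex.exp (Complex.I * t) *
            (w + Complex.exp (Complex.I * t)) ^ (n - 1) * (f : ℝ → ℂ) t) θ h3.1 hu hu'
            (hfi _ (by fun_prop) θ h3)
    have hFi : IntervalIntegrable (fun s : ℝ => Complex.I * Complex.exp (Complex.I * s) * F s)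
        volume 0 θ := by
      refine ContinuousOn.intervalIntegrable ?_
      refine hu'.continuousOn.mul ?_
      refine intervalIntegral.continuousOn_primitive_interval ?_
      rw [Set.uIcc_of_le h3.1, integrableOn_Icc_iff_integrableOn_Ioc]
      exact hfi _ (by fun_prop) θ h3
    have hE : ∫ s in (0 : ℝ)..θ, Complex.I * Complex.exp (Complex.I * s) *
        ((w + Complex.exp (Complex.I * s)) ^ n * (f : ℝ → ℂ) s - (n : ℂ) *
          ∫ t in (0 : ℝ)..s, Complex.I * Complex.exp (Complex.I * t) *
            (w + Complex.exp (Complex.I * t)) ^ (n - 1) * (f : ℝ → ℂ) t ∂muK) =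
        (∫ s in (0 : ℝ)..θ, Complex.I * Complex.exp (Complex.I * s) *
          (w + Complex.exp (Complex.I * s)) ^ n * (f : ℝ → ℂ) s) -
        n * ∫ s in (0 : ℝ)..θ, Complex.I * Complex.exp (Complex.I * s) * F s := by
      rw [← intervalIntegral.integral_const_mul, ← intervalIntegral.integral_sub
        ((intervalIntegrable_iff_integrableOn_Ioc_of_le h3.1).2 (hfi _ (by fun_prop) θ h3))
        (hFi.const_mul _)]
      refine intervalIntegral.integral_congr fun s hs => ?_
      rw [Set.uIcc_of_le h3.1] at hs
      simp only [muK_integral _ s ⟨hs.1, hs.2.trans h3.2⟩, hF]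
      ring
    have hn : (n : ℂ) * ∫ t in (0 : ℝ)..θ, (w + Complex.exp (Complex.I * t)) *
        (Complex.I * Complex.exp (Complex.I * t) *
            (w + Complex.exp (Complex.I * t)) ^ (n - 1) * (f : ℝ → ℂ) t) =
        (n : ℂ) * ∫ t in (0 : ℝ)..θ, Complex.I * Complex.exp (Complex.I * t) *
            (w + Complex.exp (Complex.I * t)) ^ n * (f : ℝ → ℂ) t := by
      rcases n with _ | n
      · simp
      · congr 1
        refine intervalIntegral.integral_congr fun s _ => ?_
        simp only [Nat.add_sub_cancel]
        ring
    rw [hE]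
    push_cast
    linear_combination (n : ℂ) * hP - hn

open MeasureTheory Real in
theorem kalisch_pow_apply
    (S : Lp ℂ 2 muK →L[ℂ] Lp ℂ 2 muK)
    (hS : ∀ f : Lp ℂ 2 muK, ∀ᵐ θ ∂muK,
      (S f : ℝ → ℂ) θ = Complex.exp (Complex.I * θ) * (f : ℝ → ℂ) θ -
        ∫ t in (0 : ℝ)..θ, Complex.I * Complex.exp (Complex.I * t) * (f : ℝ → ℂ) t ∂muK)
    (w : ℂ) (n : ℕ) (hn : 0 < n) (f : Lp ℂ 2 muK) :
    ∀ᵐ θ ∂muK,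
      (((w • (1 : Lp ℂ 2 muK →L[ℂ] Lp ℂ 2 muK) + S) ^ n) f : ℝ → ℂ) θ =
        (w + Complex.exp (Complex.I * θ)) ^ n * (f : ℝ → ℂ) θ -
          (n : ℂ) * ∫ t in (0 : ℝ)..θ, Complex.I * Complex.exp (Complex.I * t) *
            (w + Complex.exp (Complex.I * t)) ^ (n - 1) * (f : ℝ → ℂ) t ∂muK := by
  exact kalisch_aux S hS w n f
end
end
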